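/- arXiv:2512.17706 — 2 statements merged into one kernel-verified Lean document; each statement's English description precedes it below -/
import Mathlib

section
/- Let ω = e^{2πi/3} and define the qubit POVMs E = (diag(1,0), diag(0,1)), F = ((1/2)·[[1,1],[1,1]], (1/2)·[[1,−1],[−1,1]]), G = ((1/2)·[[1, ω],[conj(ω), 1]], (1/2)·[[1, −ω],[−conj(ω), 1]]), and H = ((1/2)·[[1, conj(ω)],[ω, 1]], (1/2)·[[1, −conj(ω)],[−ω, 1]]). If s ∈ [0,1] is such that the noisy POVMs E(s), F(s), G(s), H(s) are compatible, then s ≤ 2/√13. Consequently, the minimum compatibility degree of four 2-outcome qubit measurements satisfies s_ℂ(2, 4, (2,2,2,2)) ≤ 2/√13. -/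
open Matrix
open scoped ComplexOrder

/-- A POVM: a family of PSD complex Hermitian matrices summing to the identity. -/
def IsPOVM {d : ℕ} {ι : Type*} [Fintype ι] (E : ι → Matrix (Fin d) (Fin d) ℂ) : Prop :=
  (∀ i, (E i).PosSemidef) ∧ ∑ i, E i = 1

/-- A `g`-tuple of POVMs (with `k x` outcomes each) is compatible if there is a joint POVM
with the corresponding marginals. -/
def CompatibleFamily {d g : ℕ} (k : Fin g → ℕ)
    (E : (x : Fin g) → Fin (k x) → Matrix (Fin d) (Fin d) ℂ) : Prop :=
  ∃ J : ((y : Fin g) → Fin (k y)) → Matrix (Fin d) (Fin d) ℂ,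
    IsPOVM J ∧
      ∀ (x : Fin g) (i : Fin (k x)),
        E x i = ∑ j : (y : Fin g) → Fin (k y), if j x = i then J j else 0

/-- The compatibility degree of a tuple of POVMs: the supremum of those `s ∈ [0,1]` for which
the noisy versions `E_i(s) = s·E_i + (1−s)·I/k` are compatible. -/
noncomputable def compatDeg {d g : ℕ} (k : Fin g → ℕ)
    (E : (x : Fin g) → Fin (k x) → Matrix (Fin d) (Fin d) ℂ) : ℝ :=
  sSup {s : ℝ | s ∈ Set.Icc (0 : ℝ) 1 ∧
    CompatibleFamily k
      (fun x i => s • E x i + ((1 - s) / (k x : ℝ)) • (1 : Matrix (Fin d) (Fin d) ℂ))}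

/-- `ω = e^{2πi/3}`. -/
noncomputable def ω : ℂ := Complex.exp (2 * Real.pi * Complex.I / 3)

/-- The four dichotomic qubit POVMs `E, F, G, H`. -/
noncomputable def M7 : Fin 4 → Fin 2 → Matrix (Fin 2) (Fin 2) ℂ
  | 0, 0 => !![1, 0; 0, 0]
  | 0, 1 => !![0, 0; 0, 1]
  | 1, 0 => (1 / 2 : ℂ) • !![1, 1; 1, 1]
  | 1, 1 => (1 / 2 : ℂ) • !![1, -1; -1, 1]
  | 2, 0 => (1 / 2 : ℂ) • !![1, ω; starRingEnd ℂ ω, 1]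
  | 2, 1 => (1 / 2 : ℂ) • !![1, -ω; -(starRingEnd ℂ ω), 1]
  | 3, 0 => (1 / 2 : ℂ) • !![1, starRingEnd ℂ ω; ω, 1]
  | 3, 1 => (1 / 2 : ℂ) • !![1, -(starRingEnd ℂ ω); -ω, 1]

/-!
Compatibility is a semidefinite program, so incompatibility has a dual certificate: matrices
`W x i` and `B` with `∑ x, W x (j x) ≤ B` for all `j` force `∑ x, ∑ i, tr (W x i * E x i) ≤ tr B`
for compatible `E`. For unbiased qubit measurements with Bloch vectors `v x`, the certificate
`W x i = (-1) ^ i σ(u x)`, `B = c • 1` is valid when every signed sum of the `u x` has norm at most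
`c`, and it gives `∑ x, ⟪u x, v x⟫ ≤ c`.

Here `F, G, H` point along a planar trine orthogonal to the direction of `E`. Take the Bloch vectors
themselves as certificate, with weight `4` on `E` and `3` on the trine. A signed sum of the trine is
either zero or has norm `2`, so `c ^ 2 = 4 ^ 2 + (3 * 2) ^ 2 = 4 * 13`, whereas noise level `s`
gives `∑ x, ⟪u x, s • v x⟫ = (4 + 3 * 3) * s = 13 * s`. Hence `13 * s ≤ 2 * √13`.
-/

section Positivity

variable {n 𝕜 : Type*} [Fintype n] [RCLike 𝕜]

open scoped MatrixOrder in
theorem trace_mul_nonneg_of_posSemidef {A B : Matrix n n 𝕜} (hA : A.PosSemidef)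
    (hB : B.PosSemidef) : 0 ≤ (A * B).trace := by
  classical
  obtain ⟨C, rfl⟩ := CStarAlgebra.nonneg_iff_eq_star_mul_self.mp hB.nonneg
  rw [star_eq_conjTranspose, ← mul_assoc, trace_mul_comm, ← mul_assoc]
  exact (hA.mul_mul_conjTranspose_same C).trace_nonneg

variable [DecidableEq n]

theorem posSemidef_smul_one_add_of_mul_self_eq {A : Matrix n n 𝕜} (hA : A.IsHermitian) {a c : ℝ}
    (hAA : A * A = a • (1 : Matrix n n 𝕜)) (hac : a ≤ c ^ 2) (hc : 0 < c) :
    (c • (1 : Matrix n n 𝕜) + A).PosSemidef := by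
  have hsq : ((c • (1 : Matrix n n 𝕜) + A) * (c • 1 + A)).PosSemidef := by
    have hherm : (c • (1 : Matrix n n 𝕜) + A)ᴴ = c • 1 + A := by simp [hA.eq]
    simpa only [hherm] using posSemidef_conjTranspose_mul_self (c • (1 : Matrix n n 𝕜) + A)
  have hrest : ((c ^ 2 - a) • (1 : Matrix n n 𝕜)).PosSemidef :=
    PosSemidef.one.smul (sub_nonneg.2 hac)
  have hdecomp : c • (1 : Matrix n n 𝕜) + A =
      (2 * c)⁻¹ • ((c • 1 + A) * (c • 1 + A) + (c ^ 2 - a) • (1 : Matrix n n 𝕜)) := by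
    rw [eq_inv_smul_iff₀ (by positivity)]
    simp only [add_mul, mul_add, hAA, smul_mul_assoc, mul_smul_comm, one_mul, mul_one]
    module
  rw [hdecomp]
  exact (hsq.add hrest).smul (by positivity)

end Positivity

theorem CompatibleFamily.sum_trace_mul_le {d g : ℕ} {k : Fin g → ℕ}
    {E W : (x : Fin g) → Fin (k x) → Matrix (Fin d) (Fin d) ℂ} {B : Matrix (Fin d) (Fin d) ℂ}
    (hE : CompatibleFamily k E)
    (hW : ∀ j : (x : Fin g) → Fin (k x), (B - ∑ x, W x (j x)).PosSemidef) :
    ∑ x, ∑ i, (W x i * E x i).trace ≤ B.trace := by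
  obtain ⟨J, ⟨hJ, hJ_sum⟩, hJ_marginal⟩ := hE
  have hmarginal (x : Fin g) : ∑ i, W x i * E x i = ∑ j, W x (j x) * J j := by
    simp_rw [hJ_marginal x, Finset.mul_sum, mul_ite, mul_zero]
    rw [Finset.sum_comm]
    simp only [Finset.sum_ite_eq, Finset.mem_univ, if_true]
  have hgap : B.trace - ∑ x, ∑ i, (W x i * E x i).trace =
      ∑ j, ((B - ∑ x, W x (j x)) * J j).trace := by
    simp_rw [← trace_sum, hmarginal, sub_mul, Finset.sum_mul, Finset.sum_sub_distrib,
      ← Finset.mul_sum, hJ_sum, mul_one, trace_sub]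
    rw [Finset.sum_comm]
  rw [← sub_nonneg, hgap]
  exact Finset.sum_nonneg fun j _ => trace_mul_nonneg_of_posSemidef (hW j) (hJ j)

theorem compatDeg_nonneg {d g : ℕ} (k : Fin g → ℕ)
    (E : (x : Fin g) → Fin (k x) → Matrix (Fin d) (Fin d) ℂ) : 0 ≤ compatDeg k E :=
  Real.sSup_nonneg fun _ hs => hs.1.1

/-- The traceless Hermitian matrix `r₀ σ_x + r₁ σ_y + r₂ σ_z` with Pauli coordinates `r`. -/
noncomputable def pauliMatrix : EuclideanSpace ℝ (Fin 3) →ₗ[ℝ] Matrix (Fin 2) (Fin 2) ℂ where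
  toFun r := !![(r 2 : ℂ), r 0 - r 1 * Complex.I; r 0 + r 1 * Complex.I, -r 2]
  map_add' r r' := by
    ext i j
    fin_cases i <;> fin_cases j <;> simp <;> ring
  map_smul' c r := by
    ext i j
    fin_cases i <;> fin_cases j <;> simp <;> ring

theorem pauliMatrix_apply (r : EuclideanSpace ℝ (Fin 3)) :
    pauliMatrix r = !![(r 2 : ℂ), r 0 - r 1 * Complex.I; r 0 + r 1 * Complex.I, -r 2] :=
  rfl

theorem isHermitian_pauliMatrix (r : EuclideanSpace ℝ (Fin 3)) : (pauliMatrix r).IsHermitian := by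
  ext i j
  fin_cases i <;> fin_cases j <;> simp [pauliMatrix_apply, sub_eq_add_neg]

theorem trace_pauliMatrix (r : EuclideanSpace ℝ (Fin 3)) : (pauliMatrix r).trace = 0 := by
  simp [pauliMatrix_apply, trace_fin_two]

theorem trace_pauliMatrix_mul_pauliMatrix (r r' : EuclideanSpace ℝ (Fin 3)) :
    (pauliMatrix r * pauliMatrix r').trace = 2 * (inner ℝ r r' : ℝ) := by
  simp only [pauliMatrix_apply, trace_fin_two, mul_fin_two, of_apply, cons_val', cons_val_zero,
    cons_val_one, cons_val_fin_one, PiLp.inner_apply, Fin.sum_univ_three, RCLike.inner_apply,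
    conj_trivial, Complex.ofReal_add, Complex.ofReal_mul]
  linear_combination (-2 * r 1 * r' 1 : ℂ) * Complex.I_mul_I

theorem pauliMatrix_mul_self (r : EuclideanSpace ℝ (Fin 3)) :
    pauliMatrix r * pauliMatrix r = (‖r‖ ^ 2) • (1 : Matrix (Fin 2) (Fin 2) ℂ) := by
  have hdiag : (r 2 : ℂ) * r 2 + (r 0 - r 1 * Complex.I) * (r 0 + r 1 * Complex.I) =
      (‖r‖ : ℂ) ^ 2 := by
    rw [← Complex.ofReal_pow, EuclideanSpace.real_norm_sq_eq, Fin.sum_univ_three]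
    push_cast
    linear_combination (-(r 1 : ℂ) ^ 2) * Complex.I_mul_I
  ext i j
  fin_cases i <;> fin_cases j
  · simpa [pauliMatrix_apply] using hdiag
  · simp [pauliMatrix_apply]
    ring
  · simp [pauliMatrix_apply]
    ring
  · simpa [pauliMatrix_apply, add_comm, mul_comm] using hdiag

theorem posSemidef_smul_one_add_pauliMatrix {r : EuclideanSpace ℝ (Fin 3)} {c : ℝ}
    (hr : ‖r‖ ≤ c) : (c • (1 : Matrix (Fin 2) (Fin 2) ℂ) + pauliMatrix r).PosSemidef := by
  obtain rfl | hc := ((norm_nonneg r).trans hr).eq_or_lt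
  · simp [norm_le_zero_iff.1 hr, PosSemidef.zero]
  · exact posSemidef_smul_one_add_of_mul_self_eq (isHermitian_pauliMatrix r)
      (pauliMatrix_mul_self r) (by gcongr) hc

/-- The unbiased two-outcome qubit measurement `(1 ± r · σ) / 2` with Bloch vector `r`; outcome `0`
carries the plus sign. -/
noncomputable def blochPOVM (r : EuclideanSpace ℝ (Fin 3)) (i : Fin 2) :
    Matrix (Fin 2) (Fin 2) ℂ :=
  (1 / 2 : ℝ) • ((1 : Matrix (Fin 2) (Fin 2) ℂ) + pauliMatrix ((-1 : ℝ) ^ (i : ℕ) • r))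

theorem isPOVM_blochPOVM {r : EuclideanSpace ℝ (Fin 3)} (hr : ‖r‖ ≤ 1) : IsPOVM (blochPOVM r) := by
  refine ⟨fun i => ?_, ?_⟩
  · have hsign : ‖(-1 : ℝ) ^ (i : ℕ) • r‖ ≤ 1 := by simpa [norm_smul] using hr
    have heffect := (posSemidef_smul_one_add_pauliMatrix hsign).smul (one_half_pos (α := ℝ)).le
    rwa [one_smul] at heffect
  · simp only [Fin.sum_univ_two, blochPOVM, Fin.val_zero, Fin.val_one, pow_zero, pow_one, map_smul]
    module

theorem smul_blochPOVM_add_noise (s : ℝ) (r : EuclideanSpace ℝ (Fin 3)) (i : Fin 2) :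
    s • blochPOVM r i + ((1 - s) / 2) • (1 : Matrix (Fin 2) (Fin 2) ℂ) = blochPOVM (s • r) i := by
  simp only [blochPOVM, map_smul]
  module

theorem trace_smul_pauliMatrix_mul_blochPOVM (u r : EuclideanSpace ℝ (Fin 3)) (i : Fin 2) :
    (((-1 : ℝ) ^ (i : ℕ) • pauliMatrix u) * blochPOVM r i).trace = (inner ℝ u r : ℝ) := by
  have hsign : (-1 : ℂ) ^ (i : ℕ) * (-1) ^ (i : ℕ) = 1 := by simp [← mul_pow]
  simp only [blochPOVM, map_smul, smul_mul_assoc, mul_smul_comm, mul_add, mul_one, trace_smul,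
    trace_add, trace_pauliMatrix, trace_pauliMatrix_mul_pauliMatrix, smul_smul, Complex.real_smul]
  push_cast
  linear_combination (inner ℝ u r : ℂ) * hsign

theorem sum_inner_le_of_compatibleFamily_blochPOVM {g : ℕ} {u v : Fin g → EuclideanSpace ℝ (Fin 3)}
    {c : ℝ} (hu : ∀ j : Fin g → Fin 2, ‖∑ x, (-1 : ℝ) ^ (j x : ℕ) • u x‖ ≤ c)
    (hv : CompatibleFamily (fun _ => 2) fun x => blochPOVM (v x)) :
    ∑ x, inner ℝ (u x) (v x) ≤ c := by
  have hcertificate (j : Fin g → Fin 2) : (c • (1 : Matrix (Fin 2) (Fin 2) ℂ) -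
      ∑ x, (-1 : ℝ) ^ (j x : ℕ) • pauliMatrix (u x)).PosSemidef := by
    have hpos := posSemidef_smul_one_add_pauliMatrix ((norm_neg _).trans_le (hu j))
    simpa only [map_neg, map_sum, map_smul, ← sub_eq_add_neg] using hpos
  have hdual := hv.sum_trace_mul_le
    (W := fun x i => (-1 : ℝ) ^ (i : ℕ) • pauliMatrix (u x)) hcertificate
  simp only [trace_smul_pauliMatrix_mul_blochPOVM, Fin.sum_univ_two, trace_smul, trace_one,
    Fintype.card_fin] at hdual
  have hreal : ∑ x, (inner ℝ (u x) (v x) + inner ℝ (u x) (v x)) ≤ c * 2 := by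
    rw [← Complex.real_le_real]
    push_cast
    simpa only [Complex.real_smul, Nat.cast_ofNat] using hdual
  rw [Finset.sum_add_distrib] at hreal
  linarith

theorem ω_eq : ω = ⟨-1 / 2, √3 / 2⟩ := by
  have hangle : (2 * Real.pi * Complex.I / 3 : ℂ) =
      ((Real.pi - Real.pi / 3 : ℝ) : ℂ) * Complex.I := by
    push_cast
    ring
  rw [ω, hangle]
  apply Complex.ext
  · rw [Complex.exp_ofReal_mul_I_re, Real.cos_pi_sub, Real.cos_pi_div_three]
    norm_num
  · rw [Complex.exp_ofReal_mul_I_im, Real.sin_pi_sub, Real.sin_pi_div_three]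

/-- The Bloch vectors of the measurements `E, F, G, H`. -/
noncomputable def blochM7 : Fin 4 → EuclideanSpace ℝ (Fin 3) :=
  ![!₂[0, 0, 1], !₂[1, 0, 0], !₂[-1 / 2, -√3 / 2, 0], !₂[-1 / 2, √3 / 2, 0]]

theorem M7_eq_blochPOVM (x : Fin 4) : M7 x = blochPOVM (blochM7 x) := by
  ext i a b
  fin_cases x <;> fin_cases i <;> fin_cases a <;> fin_cases b <;>
    apply Complex.ext <;>
    simp [M7, blochPOVM, blochM7, pauliMatrix_apply, ω_eq] <;> norm_num <;> ring

theorem norm_blochM7 (x : Fin 4) : ‖blochM7 x‖ = 1 := by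
  rw [← sq_eq_sq₀ (norm_nonneg _) zero_le_one, EuclideanSpace.real_norm_sq_eq]
  fin_cases x <;> simp [blochM7, Fin.sum_univ_three, div_pow] <;> norm_num

/-- The weights of the Bloch vectors of `E, F, G, H` in the dual certificate; `a = 4`, `b = 3`
maximizes `(a + 3 * b) / √(a ^ 2 + 4 * b ^ 2)`. -/
def weightM7 : Fin 4 → ℝ := ![4, 3, 3, 3]

theorem neg_one_le_sum_mul_of_sq_eq_one {R : Type*} [CommRing R] [LinearOrder R]
    [IsStrictOrderedRing R] {a b c : R} (ha : a ^ 2 = 1) (hb : b ^ 2 = 1) (hc : c ^ 2 = 1) :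
    -1 ≤ a * b + a * c + b * c := by
  rcases sq_eq_one_iff.1 ha with rfl | rfl <;>
    rcases sq_eq_one_iff.1 hb with rfl | rfl <;>
    rcases sq_eq_one_iff.1 hc with rfl | rfl <;> norm_num

theorem norm_sum_smul_weightM7_smul_blochM7_le (j : Fin 4 → Fin 2) :
    ‖∑ x, (-1 : ℝ) ^ (j x : ℕ) • weightM7 x • blochM7 x‖ ≤ 2 * √13 := by
  set ε : Fin 4 → ℝ := fun x => (-1) ^ (j x : ℕ) with hε
  have hε_sq (x : Fin 4) : ε x ^ 2 = 1 := by simp [hε, ← pow_mul]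
  have htrine : -1 ≤ ε 1 * ε 2 + ε 1 * ε 3 + ε 2 * ε 3 :=
    neg_one_le_sum_mul_of_sq_eq_one (hε_sq 1) (hε_sq 2) (hε_sq 3)
  have hnorm : ‖∑ x, ε x • weightM7 x • blochM7 x‖ ^ 2 =
      43 - 9 * (ε 1 * ε 2 + ε 1 * ε 3 + ε 2 * ε 3) := by
    have h3 : √3 ^ 2 = 3 := Real.sq_sqrt (by norm_num)
    simp only [EuclideanSpace.real_norm_sq_eq, Fin.sum_univ_three, Fin.sum_univ_four, weightM7,
      blochM7, PiLp.add_apply, PiLp.smul_apply, smul_eq_mul, cons_val]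
    linear_combination 16 * hε_sq 0 + 9 * hε_sq 1 + 9 * hε_sq 2 + 9 * hε_sq 3 +
      9 / 4 * (ε 3 - ε 2) ^ 2 * h3
  refine le_of_sq_le_sq ?_ (by positivity)
  rw [hnorm, mul_pow, Real.sq_sqrt (by norm_num)]
  linarith

theorem le_of_compatibleFamily_noisy_M7 {s : ℝ}
    (h : CompatibleFamily (fun _ => 2) fun x i =>
      s • M7 x i + ((1 - s) / 2 : ℝ) • (1 : Matrix (Fin 2) (Fin 2) ℂ)) :
    s ≤ 2 / √13 := by
  simp only [M7_eq_blochPOVM, smul_blochPOVM_add_noise] at h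
  have hdual := sum_inner_le_of_compatibleFamily_blochPOVM norm_sum_smul_weightM7_smul_blochM7_le h
  have hleft : ∑ x, inner ℝ (weightM7 x • blochM7 x) (s • blochM7 x) = 13 * s := by
    simp only [real_inner_smul_left, real_inner_smul_right, real_inner_self_eq_norm_sq,
      norm_blochM7, Fin.sum_univ_four, weightM7, cons_val]
    ring
  calc
    s ≤ 2 * (√13 / 13) := by linarith
    _ = 2 / √13 := by rw [Real.sqrt_div_self', mul_one_div]

/-- If `s ∈ [0,1]` makes the noisy versions of the four POVMs `E, F, G, H` compatible, then
`s ≤ 2/√13`.  Consequently, `s_ℂ(2,4,(2,2,2,2)) ≤ 2/√13`. -/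
theorem stmt_7 :
    (∀ s ∈ Set.Icc (0 : ℝ) 1,
        CompatibleFamily (fun _ => 2)
          (fun x i => s • M7 x i + ((1 - s) / 2 : ℝ) • (1 : Matrix (Fin 2) (Fin 2) ℂ)) →
        s ≤ 2 / Real.sqrt 13) ∧
    sInf {t : ℝ | ∃ E : Fin 4 → Fin 2 → Matrix (Fin 2) (Fin 2) ℂ,
        (∀ x, IsPOVM (E x)) ∧ t = compatDeg (fun _ => 2) E}
      ≤ 2 / Real.sqrt 13 := by
  refine ⟨fun s _ h => le_of_compatibleFamily_noisy_M7 h, ?_⟩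
  have hM7 (x : Fin 4) : IsPOVM (M7 x) := by
    rw [M7_eq_blochPOVM]
    exact isPOVM_blochPOVM (norm_blochM7 x).le
  have hdeg : compatDeg (fun _ => 2) M7 ≤ 2 / √13 :=
    Real.sSup_le (fun s hs => le_of_compatibleFamily_noisy_M7 (by exact_mod_cast hs.2))
      (by positivity)
  refine csInf_le_of_le ⟨0, ?_⟩ ⟨M7, hM7, rfl⟩ hdeg
  rintro _ ⟨E, _, rfl⟩
  exact compatDeg_nonneg _ E
end

section
/- Let g ≥ 1, d ≥ 1 and k_1,…,k_g ≥ 2 be integers. Consider the supremum of λ_max(Σ_{x=1}^g Σ_{i=1}^{k_x−1} A_{i|x} ⊗ X_{i|x}) over all families of d×d complex Hermitian matrices A_{i|x} and X_{i|x} (i ∈ [k_x−1], x ∈ [g]) subject to: −(k_x/2)·A_{i|x} ≼ I_d for all i ∈ [k_x−1] and x ∈ [g]; (k_x/2)·Σ_{i=1}^{k_x−1} A_{i|x} ≼ I_d for all x ∈ [g]; and Σ_{x=1}^g Σ_{i=1}^{k_x−1} (−2/k_x + 2δ_{i,j_x})·X_{i|x} ≼ I_d for every multi-index j ∈ [k_1]×⋯×[k_g].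 Then this supremum equals 1/s_ℂ(d, g, (k_1,…,k_g)), the reciprocal of the minimum compatibility degree. -/
open Matrix
open scoped Kronecker ComplexOrder

/-- The largest eigenvalue of a (Hermitian) complex matrix, as the supremum of its real
eigenvalues. -/
noncomputable def lambdaMaxC {m : Type*} [Fintype m] (M : Matrix m m ℂ) : ℝ :=
  sSup {t : ℝ | ∃ v : m → ℂ, v ≠ 0 ∧ M.mulVec v = (t : ℂ) • v}

/-- The minimum compatibility degree `s_ℂ(d,g,(k_1,…,k_g))`: the infimum of the compatibility
degrees over all `g`-tuples of `d`-dimensional POVMs with `k_1, …, k_g` outcomes. -/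
noncomputable def minCompatDeg (d g : ℕ) (k : Fin g → ℕ) : ℝ :=
  sInf {t : ℝ | ∃ E : (x : Fin g) → Fin (k x) → Matrix (Fin d) (Fin d) ℂ,
    (∀ x, IsPOVM (E x)) ∧ t = compatDeg k E}

/-!
Discarding the last effect of every POVM and centering the others,
`A_{i|x} = 2 E_{i|x} - (2/k_x) 1`, turns the white-noise mixture `E(s)` into the dilation `s A`,
and the compatible families become the tuples `∑ j, v_j • J_j`, where `J` is a POVM indexed by the
multi-indices `j` and the points `v_j` are the columns of coefficients in the constraints on `X`.
By duality, such tuples `B` are exactly those with `∑ B ⊗ X ≼ 1` for every `X` satisfying these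
constraints: if `B` is not of this form, separate `(1, B)` from the closed cone of the pairs
`(∑ J_j, ∑ v_j • J_j)`, identify the separating functional with matrices `(Z, Y)`, note that `Z ≽ 0`
because `0` is a convex combination of the `v_j`, and conjugate `Y` by a square root of `Z` to get a
violating `X`. Hence `E(s)` is compatible if and only if `s λ_max(∑ A ⊗ X) ≤ 1` for all
admissible `X`, and it remains to optimize over `E`.
-/

section MatrixAlgebra

lemma posSemidef_smul_iff_of_pos {n : Type*} {M : Matrix n n ℂ} {c : ℝ} (hc : 0 < c) :
    (c • M).PosSemidef ↔ M.PosSemidef :=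
  ⟨fun h ↦ by simpa [smul_smul, hc.ne'] using h.smul (inv_nonneg.mpr hc.le), fun h ↦ h.smul hc.le⟩

open scoped MatrixOrder Matrix.Norms.L2Operator

variable {n : Type*} [Fintype n]

lemma spectrum_real_eq_setOf_mulVec [DecidableEq n] (M : Matrix n n ℂ) :
    spectrum ℝ M = {t : ℝ | ∃ v : n → ℂ, v ≠ 0 ∧ M.mulVec v = (t : ℂ) • v} := by
  ext t
  rw [← spectrum.preimage_algebraMap ℂ, Set.mem_preimage, ← Matrix.spectrum_toLin',
    ← Module.End.hasEigenvalue_iff_mem_spectrum]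
  constructor
  · intro h
    obtain ⟨v, hv⟩ := h.exists_hasEigenvector
    exact ⟨v, hv.2, by simpa using hv.apply_eq_smul⟩
  · rintro ⟨v, hv, h⟩
    exact Module.End.hasEigenvalue_of_hasEigenvector
      ⟨Module.End.mem_eigenspace_iff.mpr (by simpa using h), hv⟩

lemma lambdaMaxC_le_iff [DecidableEq n] [Nonempty n] {M : Matrix n n ℂ} (hM : M.IsHermitian)
    {c : ℝ} : lambdaMaxC M ≤ c ↔ (c • (1 : Matrix n n ℂ) - M).PosSemidef := by
  have hspec := hM.spectrum_real_eq_range_eigenvalues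
  rw [← Matrix.le_iff, ← Algebra.algebraMap_eq_smul_one, le_algebraMap_iff_spectrum_le, lambdaMaxC,
    ← spectrum_real_eq_setOf_mulVec, hspec,
    csSup_le_iff (Set.finite_range _).bddAbove (Set.range_nonempty _)]

lemma exists_isHermitian_forall_eq_re_trace_mul (φ : Matrix n n ℂ →ₗ[ℝ] ℝ) :
    ∃ H : Matrix n n ℂ, H.IsHermitian ∧
      ∀ B : Matrix n n ℂ, B.IsHermitian → φ B = (B * H).trace.re := by
  let pairing : Matrix n n ℂ →ₗ[ℝ] Module.Dual ℝ (Matrix n n ℂ) :=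
    (LinearMap.mul ℝ (Matrix n n ℂ)).flip.compr₂ (Complex.reLm ∘ₗ Matrix.traceLinearMap n ℝ ℂ)
  have pairing_apply (G B : Matrix n n ℂ) : pairing G B = (B * G).trace.re := rfl
  have pairing_injective : Function.Injective pairing := by
    refine (injective_iff_map_eq_zero _).mpr fun G hG ↦
      Matrix.trace_conjTranspose_mul_self_eq_zero_iff.mp ?_
    have him := (Complex.nonneg_iff.mp (Matrix.posSemidef_conjTranspose_mul_self G).trace_nonneg).2
    exact Complex.ext (LinearMap.congr_fun hG Gᴴ) him.symm
  obtain ⟨G, rfl⟩ := (LinearMap.injective_iff_surjective_of_finrank_eq_finrank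
    Subspace.dual_finrank_eq.symm).mp pairing_injective φ
  refine ⟨(1 / 2 : ℝ) • (G + Gᴴ), (isHermitian_add_transpose_self G).smul (.all _), fun B hB ↦ ?_⟩
  have trace_adjoint : (B * Gᴴ).trace.re = (B * G).trace.re := by
    rw [← hB.eq, ← conjTranspose_mul, trace_conjTranspose, trace_mul_comm, hB.eq]
    simp
  rw [pairing_apply, Matrix.mul_smul, trace_smul, mul_add, trace_add, Complex.smul_re,
    Complex.add_re, trace_adjoint, smul_eq_mul]
  ring

lemma posSemidef_of_forall_re_trace_mul_nonneg {M : Matrix n n ℂ} (hM : M.IsHermitian)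
    (h : ∀ J : Matrix n n ℂ, J.PosSemidef → 0 ≤ (J * M).trace.re) : M.PosSemidef := by
  refine .of_dotProduct_mulVec_nonneg hM fun v ↦ ?_
  have trace_eq : (vecMulVec v (star v) * M).trace = star v ⬝ᵥ (M *ᵥ v) := by
    rw [vecMulVec_mul, trace_vecMulVec, dotProduct_comm, dotProduct_mulVec]
  exact Complex.nonneg_iff.mpr ⟨trace_eq ▸ h _ (posSemidef_vecMulVec_self_star v),
    (hM.im_star_dotProduct_mulVec_self v).symm⟩

lemma star_vec_dotProduct_kronecker_mulVec_vec (B X R : Matrix n n ℂ) :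
    star (vec R) ⬝ᵥ ((B ⊗ₖ X) *ᵥ vec R) = (Rᴴ * X * R * Bᵀ).trace := by
  rw [kronecker_mulVec_vec, star_vec_dotProduct_vec, ← Matrix.mul_assoc, ← Matrix.mul_assoc]

lemma exists_isUnit_conjTranspose_mul_self_of_posDef [DecidableEq n] {M : Matrix n n ℂ}
    (hM : M.PosDef) : ∃ R : Matrix n n ℂ, IsUnit R ∧ M = Rᴴ * R :=
  CStarAlgebra.isStrictlyPositive_iff_eq_star_mul_self.mp (isStrictlyPositive_iff_posDef.mpr hM)

lemma isProperMap_sum_nonneg {κ A : Type*} [Fintype κ] [CStarAlgebra A] [PartialOrder A]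
    [StarOrderedRing A] [ProperSpace A] :
    IsProperMap fun J : {J : κ → A // 0 ≤ J} ↦ ∑ j, J.1 j := by
  have : ProperSpace {J : κ → A // 0 ≤ J} := .of_isClosed isClosed_Ici
  have hcont : Continuous fun J : {J : κ → A // 0 ≤ J} ↦ ∑ j, J.1 j := by fun_prop
  have norm_le_norm_sum (J : {J : κ → A // 0 ≤ J}) : ‖J.1‖ ≤ ‖∑ j, J.1 j‖ :=
    (pi_norm_le_iff_of_nonneg (norm_nonneg _)).mpr fun j ↦
      CStarAlgebra.norm_le_norm_of_nonneg_of_le (J.2 j)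
        (Finset.single_le_sum (fun l _ ↦ J.2 l) (Finset.mem_univ j))
  refine isProperMap_iff_isCompact_preimage.mpr ⟨hcont, fun K hK ↦ ?_⟩
  obtain ⟨R, hR⟩ := hK.isBounded.exists_norm_le
  refine Metric.isCompact_of_isClosed_isBounded (hK.isClosed.preimage hcont)
    ((Metric.isBounded_closedBall (x := ⟨0, le_rfl⟩) (r := R)).subset fun J hJ ↦ ?_)
  simpa [Subtype.dist_eq] using (norm_le_norm_sum J).trans (hR _ hJ)

lemma isClosed_image_nonneg_sum_prodMk {κ A F : Type*} [Fintype κ] [CStarAlgebra A]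
    [PartialOrder A] [StarOrderedRing A] [ProperSpace A] [TopologicalSpace F] [T2Space F]
    {f : (κ → A) → F} (hf : Continuous f) :
    IsClosed ((fun J ↦ (∑ j, J j, f J)) '' {J | 0 ≤ J}) := by
  rw [Set.image_eq_range]
  exact (isProperMap_of_comp_of_t2 (by fun_prop) continuous_fst isProperMap_sum_nonneg).isClosedMap
    |>.isClosed_range

end MatrixAlgebra

section MatrixHull

open scoped MatrixOrder Matrix.Norms.L2Operator

variable {n κ ι : Type*}

/-- The linear map `J ↦ (∑ j, J j, i ↦ ∑ j, c j i • J j)`. The tuples `B` for which `(1, B)` is the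
image of a positive semidefinite family form `matrixHull c`. -/
noncomputable def matrixConeMap [Fintype κ] (c : κ → ι → ℝ) :
    (κ → Matrix n n ℂ) →ₗ[ℝ] Matrix n n ℂ × (ι → Matrix n n ℂ) :=
  (∑ j, LinearMap.proj j).prod (LinearMap.pi fun i ↦ ∑ j, c j i • LinearMap.proj j)

lemma matrixConeMap_apply [Fintype κ] (c : κ → ι → ℝ) (J : κ → Matrix n n ℂ) :
    matrixConeMap c J = (∑ j, J j, fun i ↦ ∑ j, c j i • J j) := by
  ext <;> simp [matrixConeMap]

lemma matrixConeMap_single [Fintype κ] [DecidableEq κ] (c : κ → ι → ℝ) (j : κ)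
    (M : Matrix n n ℂ) :
    matrixConeMap c (Pi.single j M) = (M, fun i ↦ c j i • M) := by
  rw [matrixConeMap_apply]
  refine Prod.ext (by simp) (funext fun i ↦ ?_)
  simp [Pi.single_apply]

lemma posSemidef_of_forall_posSemidef_add_sum [Finite n] [Fintype ι] {c : κ → ι → ℝ}
    (h0 : 0 ∈ convexHull ℝ (Set.range c)) {Z : Matrix n n ℂ} {Y : ι → Matrix n n ℂ}
    (hZY : ∀ j, (Z + ∑ i, c j i • Y i).PosSemidef) : Z.PosSemidef := by
  have := Fintype.ofFinite n
  let L : (ι → ℝ) →ₗ[ℝ] Matrix n n ℂ := Fintype.linearCombination ℝ Y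
  have hconv : Convex ℝ (L ⁻¹' Set.Ici (-Z)) := (convex_Ici _).linear_preimage L
  have hrange : Set.range c ⊆ L ⁻¹' Set.Ici (-Z) := by
    rintro _ ⟨j, rfl⟩
    simpa [L, Matrix.le_iff, Fintype.linearCombination_apply, add_comm] using hZY j
  simpa [nonneg_iff_posSemidef] using convexHull_min hrange hconv h0

lemma exists_forall_eq_re_trace_add_sum [Fintype n] [Fintype ι]
    (f : Matrix n n ℂ × (ι → Matrix n n ℂ) →ₗ[ℝ] ℝ) :
    ∃ (Z : Matrix n n ℂ) (Y : ι → Matrix n n ℂ), Z.IsHermitian ∧ (∀ i, (Y i).IsHermitian) ∧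
      ∀ M B, M.IsHermitian → (∀ i, (B i).IsHermitian) →
        f (M, B) = (M * Z).trace.re + ∑ i, (B i * Y i).trace.re := by
  classical
  obtain ⟨Z, hZ, hfZ⟩ := exists_isHermitian_forall_eq_re_trace_mul (f ∘ₗ LinearMap.inl ℝ _ _)
  choose Y hY hfY using fun i ↦ exists_isHermitian_forall_eq_re_trace_mul
    (f ∘ₗ LinearMap.inr ℝ _ _ ∘ₗ LinearMap.single ℝ (fun _ : ι ↦ Matrix n n ℂ) i)
  refine ⟨Z, Y, hZ, hY, fun M B hM hB ↦ ?_⟩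
  have hsplit : (M, B) = LinearMap.inl ℝ _ _ M +
      LinearMap.inr ℝ _ _ (∑ i, LinearMap.single ℝ (fun _ : ι ↦ Matrix n n ℂ) i (B i)) := by
    simp [Finset.univ_sum_single B]
  rw [hsplit, map_add, map_sum, map_sum, ← hfZ M hM]
  congr 1
  exact Finset.sum_congr rfl fun i _ ↦ hfY i (B i) (hB i)

/-- The matrix convex hull, at the level of `n × n` matrices, of the points `c j ∈ ℝ^ι`: the tuples
`∑ j, c j • J j` obtained by weighting the points with a POVM `J` instead of with scalars. -/
def matrixHull [DecidableEq n] [Fintype κ] (c : κ → ι → ℝ) : Set (ι → Matrix n n ℂ) :=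
  {B | ∃ J : κ → Matrix n n ℂ, (∀ j, (J j).PosSemidef) ∧ ∑ j, J j = 1 ∧
    ∀ i, B i = ∑ j, c j i • J j}

/-- The free spectrahedron, at the level of `n × n` matrices, cut out by the points `c j ∈ ℝ^ι`:
the Hermitian tuples `X` with `∑ i, c j i • X i ≼ 1` for every `j`. -/
def matrixPolar [DecidableEq n] [Fintype ι] (c : κ → ι → ℝ) : Set (ι → Matrix n n ℂ) :=
  {X | (∀ i, (X i).IsHermitian) ∧ ∀ j, (1 - ∑ i, c j i • X i).PosSemidef}

lemma exists_separating_of_notMem_matrixHull [Fintype n] [DecidableEq n] [Fintype κ] [Fintype ι]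
    {c : κ → ι → ℝ} {B : ι → Matrix n n ℂ} (hB : ∀ i, (B i).IsHermitian) (hBc : B ∉ matrixHull c) :
    ∃ (Z : Matrix n n ℂ) (Y : ι → Matrix n n ℂ), Z.IsHermitian ∧ (∀ i, (Y i).IsHermitian) ∧
      (∀ j, (Z + ∑ i, c j i • Y i).PosSemidef) ∧
      Z.trace.re + ∑ i, (B i * Y i).trace.re < 0 := by
  classical
  let cone : ProperCone ℝ (Matrix n n ℂ × (ι → Matrix n n ℂ)) :=
    { toSubmodule := (PointedCone.positive ℝ (κ → Matrix n n ℂ)).map (matrixConeMap c)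
      isClosed' := by
        have hclosed := isClosed_image_nonneg_sum_prodMk (κ := κ) (A := Matrix n n ℂ)
          (f := fun J i ↦ ∑ j, c j i • J j) (by fun_prop)
        rwa [← Set.image_congr fun J _ ↦ matrixConeMap_apply c J] at hclosed }
  have hcone : (1, B) ∉ cone := by
    rintro ⟨J, hJ, hJB⟩
    have hJB := (matrixConeMap_apply c J).symm.trans hJB
    exact hBc ⟨J, fun j ↦ nonneg_iff_posSemidef.mp (hJ j), congrArg Prod.fst hJB,
      fun i ↦ congrFun (congrArg Prod.snd hJB).symm i⟩
  obtain ⟨f, hf_cone, hf_lt⟩ := cone.hyperplane_separation_point hcone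
  obtain ⟨Z, Y, hZ, hY, hf⟩ := exists_forall_eq_re_trace_add_sum f.toLinearMap
  have hZY (j : κ) : (Z + ∑ i, c j i • Y i).IsHermitian :=
    hZ.add (isSelfAdjoint_sum _ fun i _ ↦ (hY i).smul (.all (c j i)))
  refine ⟨Z, Y, hZ, hY, fun j ↦ posSemidef_of_forall_re_trace_mul_nonneg (hZY j) fun M hM ↦ ?_, ?_⟩
  · have hfM : 0 ≤ f (matrixConeMap c (Pi.single j M)) :=
      hf_cone _ ⟨_, Pi.single_nonneg.mpr hM.nonneg, rfl⟩
    have hfM' := hf M (fun i ↦ c j i • M) hM.1 fun i ↦ hM.1.smul (.all (c j i))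
    rw [matrixConeMap_single] at hfM
    simpa [mul_add, Matrix.mul_sum, trace_sum] using hfM.trans_eq hfM'
  · simpa using (hf 1 B isHermitian_one hB).symm.trans_lt hf_lt

/- With `Zᵀ = Rᴴ * R`, the tuple `X i = -(R⁻¹ᴴ * (Y i)ᵀ * R⁻¹)` lies in the polar, and testing
`1 - ∑ i, B i ⊗ₖ X i` on the vectorization of `R` returns the right-hand side. -/
lemma re_trace_add_sum_nonneg_of_posDef [Fintype n] [DecidableEq n] [Fintype ι]
    {c : κ → ι → ℝ} {B : ι → Matrix n n ℂ}
    (hB : ∀ X ∈ matrixPolar (n := n) c, (1 - ∑ i, B i ⊗ₖ X i).PosSemidef)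
    {Z : Matrix n n ℂ} {Y : ι → Matrix n n ℂ} (hZ : Z.PosDef) (hY : ∀ i, (Y i).IsHermitian)
    (hZY : ∀ j, (Z + ∑ i, c j i • Y i).PosSemidef) :
    0 ≤ Z.trace.re + ∑ i, (B i * Y i).trace.re := by
  obtain ⟨R, hR, hZR⟩ := exists_isUnit_conjTranspose_mul_self_of_posDef hZ.transpose
  let X (i : ι) : Matrix n n ℂ := -((R⁻¹)ᴴ * (Y i)ᵀ * R⁻¹)
  have conj_X (i : ι) : Rᴴ * X i * R = -(Y i)ᵀ := by
    have hdet : IsUnit R.det := (isUnit_iff_isUnit_det R).mp hR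
    have hdet' : IsUnit Rᴴ.det := by simpa [det_conjTranspose] using hdet.star
    simp only [X, conjTranspose_nonsing_inv, Matrix.mul_neg, Matrix.neg_mul, Matrix.mul_assoc,
      nonsing_inv_mul R hdet, mul_nonsing_inv_cancel_left _ _ hdet', Matrix.mul_one]
  have hX : X ∈ matrixPolar c := by
    refine ⟨fun i ↦ (isHermitian_conjTranspose_mul_mul _ (hY i).transpose).neg, fun j ↦ ?_⟩
    have conj_slack : star R * (1 - ∑ i, c j i • X i) * R = (Z + ∑ i, c j i • Y i)ᵀ := by
      simp only [star_eq_conjTranspose, mul_sub, sub_mul, Matrix.mul_one, ← hZR, Matrix.mul_sum,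
        Matrix.sum_mul, Matrix.mul_smul, Matrix.smul_mul, conj_X, transpose_add, transpose_sum,
        transpose_smul, smul_neg, Finset.sum_neg_distrib, sub_neg_eq_add]
    exact (IsUnit.posSemidef_star_left_conjugate_iff hR).mp (conj_slack ▸ (hZY j).transpose)
  have htest : star (vec R) ⬝ᵥ ((1 - ∑ i, B i ⊗ₖ X i) *ᵥ vec R)
      = Z.trace + ∑ i, (B i * Y i).trace := by
    simp only [sub_mulVec, sum_mulVec, dotProduct_sub, dotProduct_sum, one_mulVec,
      star_vec_dotProduct_kronecker_mulVec_vec, star_vec_dotProduct_vec, conj_X, ← hZR,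
      Matrix.neg_mul, ← transpose_mul, trace_neg, trace_transpose, Finset.sum_neg_distrib,
      sub_neg_eq_add]
  have hnonneg := (hB X hX).dotProduct_mulVec_nonneg (vec R)
  rw [htest] at hnonneg
  simpa using (Complex.nonneg_iff.mp hnonneg).1

lemma re_trace_add_sum_nonneg_of_posSemidef [Fintype n] [DecidableEq n] [Fintype ι]
    {c : κ → ι → ℝ} {B : ι → Matrix n n ℂ}
    (hB : ∀ X ∈ matrixPolar (n := n) c, (1 - ∑ i, B i ⊗ₖ X i).PosSemidef)
    {Z : Matrix n n ℂ} {Y : ι → Matrix n n ℂ} (hZ : Z.PosSemidef) (hY : ∀ i, (Y i).IsHermitian)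
    (hZY : ∀ j, (Z + ∑ i, c j i • Y i).PosSemidef) :
    0 ≤ Z.trace.re + ∑ i, (B i * Y i).trace.re := by
  have hperturbed {ε : ℝ} (hε : 0 < ε) :
      0 ≤ (Z + ε • 1).trace.re + ∑ i, (B i * Y i).trace.re := by
    have hε1 : (ε • (1 : Matrix n n ℂ)).PosDef := PosDef.one.smul hε
    refine re_trace_add_sum_nonneg_of_posDef hB (hε1.posSemidef_add hZ) hY fun j ↦ ?_
    rw [add_right_comm]
    exact (hZY j).add hε1.posSemidef
  refine le_of_forall_pos_le_add fun δ hδ ↦ ?_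
  obtain ⟨ε, hε, hεδ⟩ := exists_pos_mul_lt hδ (Fintype.card n : ℝ)
  have trace_perturbed : (Z + ε • (1 : Matrix n n ℂ)).trace.re
      = Z.trace.re + Fintype.card n * ε := by simp [trace_add, trace_smul, mul_comm]
  linarith [hperturbed hε]

theorem mem_matrixHull_iff [Finite n] [DecidableEq n] [Fintype κ] [Fintype ι] {c : κ → ι → ℝ}
    (h0 : 0 ∈ convexHull ℝ (Set.range c)) {B : ι → Matrix n n ℂ} (hB : ∀ i, (B i).IsHermitian) :
    B ∈ matrixHull c ↔ ∀ X ∈ matrixPolar (n := n) c, (1 - ∑ i, B i ⊗ₖ X i).PosSemidef := by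
  have := Fintype.ofFinite n
  constructor
  · rintro ⟨J, hJ, hJ1, hJB⟩ X ⟨-, hX⟩
    have hsum : 1 - ∑ i, B i ⊗ₖ X i = ∑ j, J j ⊗ₖ (1 - ∑ i, c j i • X i) := by
      have one_eq : (1 : Matrix (n × n) (n × n) ℂ) = (∑ j, J j) ⊗ₖ 1 := by
        rw [hJ1, one_kronecker_one]
      let K := kroneckerBilinear (R := ℝ) (l := n) (m := n) (n := n) (p := n) (α := ℂ)
      have hK (M N : Matrix n n ℂ) : M ⊗ₖ N = K M N := rfl
      simp only [one_eq, hJB, hK, map_sum, map_sub, map_smul, LinearMap.sum_apply,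
        LinearMap.smul_apply, Finset.sum_sub_distrib]
      rw [Finset.sum_comm]
    rw [hsum]
    exact posSemidef_sum _ fun j _ ↦ (hJ j).kronecker (hX j)
  · intro h
    by_contra hBc
    obtain ⟨Z, Y, -, hY, hZY, hlt⟩ := exists_separating_of_notMem_matrixHull hB hBc
    exact hlt.not_ge <| re_trace_add_sum_nonneg_of_posSemidef h
      (posSemidef_of_forall_posSemidef_add_sum h0 hZY) hY hZY

end MatrixHull

section Compatibility

lemma sum_ite_prod_eq {ι R : Type*} {κ : ι → Type*} [Fintype ι] [DecidableEq ι]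
    [∀ x, Fintype (κ x)] [∀ x, DecidableEq (κ x)] [CommSemiring R] {p : ∀ x, κ x → R}
    (hp : ∀ x, ∑ i, p x i = 1) (x : ι) (i : κ x) :
    ∑ j : ∀ y, κ y, (if j x = i then ∏ y, p y (j y) else 0) = p x i := by
  let q : ∀ y, κ y → R := Function.update p x (Pi.single i (p x i))
  have hq {y : ι} (hy : y ≠ x) : q y = p y := Function.update_of_ne hy _ _
  have hqx : q x = Pi.single i (p x i) := Function.update_self _ _ _
  calc ∑ j : ∀ y, κ y, (if j x = i then ∏ y, p y (j y) else 0)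
    _ = ∑ j : ∀ y, κ y, ∏ y, q y (j y) := by
        refine Finset.sum_congr rfl fun j _ ↦ ?_
        split_ifs with hj
        · refine Finset.prod_congr rfl fun y _ ↦ ?_
          obtain rfl | hy := eq_or_ne y x
          · rw [hqx, hj, Pi.single_eq_same]
          · rw [hq hy]
        · exact (Finset.prod_eq_zero (Finset.mem_univ x) (by simp [hqx, hj])).symm
    _ = ∏ y, ∑ a, q y a := (Fintype.prod_sum q).symm
    _ = ∑ a, q x a := Fintype.prod_eq_single x fun y hy ↦ by rw [hq hy, hp]
    _ = p x i := by simp [hqx]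

variable {d g : ℕ} {k : Fin g → ℕ}

lemma IsPOVM.compatibleFamily_postprocessing {ι : Type*} [Fintype ι]
    {Λ : ι → Matrix (Fin d) (Fin d) ℂ} (hΛ : IsPOVM Λ) {p : ι → (x : Fin g) → Fin (k x) → ℝ}
    (hp : ∀ l x i, 0 ≤ p l x i) (hp1 : ∀ l x, ∑ i, p l x i = 1) :
    CompatibleFamily k fun x i ↦ ∑ l, p l x i • Λ l := by
  refine ⟨fun j ↦ ∑ l, (∏ x, p l x (j x)) • Λ l, ⟨fun j ↦ ?_, ?_⟩, fun x i ↦ ?_⟩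
  · exact posSemidef_sum _ fun l _ ↦ (hΛ.1 l).smul (Finset.prod_nonneg fun x _ ↦ hp l x _)
  · rw [Finset.sum_comm, ← hΛ.2]
    refine Finset.sum_congr rfl fun l _ ↦ ?_
    rw [← Finset.sum_smul, ← Fintype.prod_sum, Finset.prod_congr rfl fun x _ ↦ hp1 l x,
      Finset.prod_const_one, one_smul]
  · simp_rw [← Finset.sum_filter]
    rw [Finset.sum_comm]
    refine Finset.sum_congr rfl fun l _ ↦ ?_
    rw [← Finset.sum_smul, Finset.sum_filter, sum_ite_prod_eq (hp1 l)]

/-- The noisy versions at level `s` of a family of POVMs. -/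
noncomputable abbrev noisyFamily (k : Fin g → ℕ) (s : ℝ)
    (E : (x : Fin g) → Fin (k x) → Matrix (Fin d) (Fin d) ℂ) :
    (x : Fin g) → Fin (k x) → Matrix (Fin d) (Fin d) ℂ :=
  fun x i ↦ s • E x i + ((1 - s) / (k x : ℝ)) • 1

/- Measure one of the `g` POVMs, chosen uniformly at random, and answer all other questions with a
uniformly random outcome. -/
lemma compatibleFamily_noisyFamily_inv (hg : g ≠ 0) (hk : ∀ x, k x ≠ 0)
    {E : (x : Fin g) → Fin (k x) → Matrix (Fin d) (Fin d) ℂ} (hE : ∀ x, IsPOVM (E x)) :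
    CompatibleFamily k (noisyFamily k (g : ℝ)⁻¹ E) := by
  have hg' : (g : ℝ) ≠ 0 := Nat.cast_ne_zero.mpr hg
  have hk' (x : Fin g) : (k x : ℝ) ≠ 0 := Nat.cast_ne_zero.mpr (hk x)
  let Λ (q : (y : Fin g) × Fin (k y)) : Matrix (Fin d) (Fin d) ℂ := (g : ℝ)⁻¹ • E q.1 q.2
  have hΛ : IsPOVM Λ := by
    refine ⟨fun q ↦ ((hE q.1).1 q.2).smul (by positivity), ?_⟩
    rw [Fintype.sum_sigma]
    simp_rw [Λ, ← Finset.smul_sum, (hE _).2]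
    simp [← Nat.cast_smul_eq_nsmul ℝ, smul_smul, hg']
  let p (q : (y : Fin g) × Fin (k y)) (x : Fin g) (i : Fin (k x)) : ℝ :=
    if q.1 = x then if q = ⟨x, i⟩ then 1 else 0 else (k x : ℝ)⁻¹
  have hp (q x i) : 0 ≤ p q x i := by dsimp only [p]; split_ifs <;> positivity
  have hp1 (q x) : ∑ i, p q x i = 1 := by
    obtain ⟨y, a⟩ := q
    obtain rfl | hy := eq_or_ne y x
    · simp [p]
    · simp [p, hy, hk']
  convert hΛ.compatibleFamily_postprocessing hp hp1 with x i
  have hsum_self : ∑ a, p ⟨x, a⟩ x i • Λ ⟨x, a⟩ = (g : ℝ)⁻¹ • E x i := by simp [p, Λ]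
  have hsum_ne {y : Fin g} (hy : y ≠ x) :
      ∑ a, p ⟨y, a⟩ x i • Λ ⟨y, a⟩ = ((k x : ℝ)⁻¹ * (g : ℝ)⁻¹) • 1 := by
    simp [p, Λ, hy, smul_smul, ← Finset.smul_sum, (hE y).2]
  have hcoeff : (1 - (g : ℝ)⁻¹) / k x = (g - 1) * ((k x : ℝ)⁻¹ * (g : ℝ)⁻¹) := by
    field_simp
  rw [Fintype.sum_sigma, Fintype.sum_eq_add_sum_compl x, hsum_self,
    Finset.sum_congr rfl fun y hy ↦ hsum_ne (by simpa using hy), Finset.sum_const,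
    Finset.card_compl, Finset.card_singleton, Fintype.card_fin, ← Nat.cast_smul_eq_nsmul ℝ,
    smul_smul, Nat.cast_pred (Nat.pos_of_ne_zero hg), ← hcoeff]

lemma CompatibleFamily.posSemidef {E : (x : Fin g) → Fin (k x) → Matrix (Fin d) (Fin d) ℂ}
    (hE : CompatibleFamily k E) (x : Fin g) (i : Fin (k x)) : (E x i).PosSemidef := by
  obtain ⟨J, hJ, hEJ⟩ := hE
  rw [hEJ, ← Finset.sum_filter]
  exact posSemidef_sum _ fun j _ ↦ hJ.1 j

lemma isPOVM_single {ι : Type*} [Fintype ι] [DecidableEq ι] (a : ι) :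
    IsPOVM (Pi.single a 1 : ι → Matrix (Fin d) (Fin d) ℂ) := by
  refine ⟨fun i ↦ ?_, by simp⟩
  obtain rfl | hi := eq_or_ne i a
  · simpa using PosSemidef.one
  · simpa [hi] using PosSemidef.zero

/- For a POVM one of whose outcomes never occurs, the noisy effect of that outcome is
`((1 - s) / k) • 1`. -/
lemma le_one_of_forall_compatibleFamily [NeZero d] [NeZero g] (hk : ∀ x, 2 ≤ k x) {s : ℝ}
    (hs : ∀ E : (x : Fin g) → Fin (k x) → Matrix (Fin d) (Fin d) ℂ, (∀ x, IsPOVM (E x)) →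
      CompatibleFamily k (noisyFamily k s E)) : s ≤ 1 := by
  let zeroth (x : Fin g) : Fin (k x) := ⟨0, by linarith [hk x]⟩
  let first (x : Fin g) : Fin (k x) := ⟨1, hk x⟩
  have hne (x : Fin g) : first x ≠ zeroth x := by simp [first, zeroth]
  have hpsd := (hs (fun x ↦ Pi.single (zeroth x) 1) fun x ↦ isPOVM_single _).posSemidef 0 (first 0)
  have hdiag : 0 ≤ (1 - s) / (k 0 : ℝ) := by
    have := hpsd.diag_nonneg (i := 0)
    simp only [noisyFamily, Pi.single_eq_of_ne (hne 0), smul_zero, zero_add, Matrix.smul_apply,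
      one_apply_eq, Complex.real_smul, mul_one] at this
    exact_mod_cast this
  have hk0 : (0 : ℝ) < k 0 := by exact_mod_cast (hk 0).trans_lt' two_pos
  linarith [(le_div_iff₀ hk0).mp hdiag]

end Compatibility

section Jewel

/-- The effects of an `n`-outcome measurement without the last one, rescaled and shifted so that the
trivial effects `1 / n` go to `0`. -/
noncomputable def centeredEffects {d n : ℕ} (E : Fin n → Matrix (Fin d) (Fin d) ℂ)
    (i : Fin (n - 1)) : Matrix (Fin d) (Fin d) ℂ :=
  (2 : ℝ) • E (i.castLE (Nat.sub_le n 1)) - (2 / n : ℝ) • 1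

lemma centeredEffects_succ {d m : ℕ} (E : Fin (m + 1) → Matrix (Fin d) (Fin d) ℂ) (i : Fin m) :
    centeredEffects E i = (2 : ℝ) • E i.castSucc - (2 / (m + 1 : ℕ) : ℝ) • 1 :=
  rfl

lemma IsPOVM.isHermitian_centeredEffects {d n : ℕ} {E : Fin n → Matrix (Fin d) (Fin d) ℂ}
    (hE : IsPOVM E) (i : Fin (n - 1)) : (centeredEffects E i).IsHermitian :=
  ((hE.1 _).1.smul (.all 2)).sub (isHermitian_one.smul (.all _))

lemma eq_of_centeredEffects_eq {d n : ℕ} {E F : Fin n → Matrix (Fin d) (Fin d) ℂ}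
    (hsum : ∑ i, E i = ∑ i, F i) (h : centeredEffects E = centeredEffects F) : E = F := by
  obtain _ | m := n
  · exact Subsingleton.elim _ _
  have hcast (i : Fin m) : E i.castSucc = F i.castSucc := by
    simpa [centeredEffects_succ] using congrFun h i
  rw [Fin.sum_univ_castSucc, Fin.sum_univ_castSucc, Finset.sum_congr rfl fun i _ ↦ hcast i,
    add_right_inj] at hsum
  exact funext (Fin.lastCases hsum hcast)

lemma one_add_smul_centeredEffects {d n : ℕ} (E : Fin n → Matrix (Fin d) (Fin d) ℂ)
    (i : Fin (n - 1)) :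
    1 + (n / 2 : ℝ) • centeredEffects E i = (n : ℝ) • E (i.castLE (Nat.sub_le n 1)) := by
  have hn : (n : ℝ) ≠ 0 := Nat.cast_ne_zero.mpr (by have := i.2; lia)
  rw [centeredEffects]
  match_scalars <;> field_simp
  ring

lemma one_sub_smul_sum_centeredEffects {d m : ℕ} {E : Fin (m + 1) → Matrix (Fin d) (Fin d) ℂ}
    (hE : ∑ i, E i = 1) :
    1 - ((m + 1 : ℕ) / 2 : ℝ) • ∑ i, centeredEffects E i = ((m + 1 : ℕ) : ℝ) • E (Fin.last m) := by
  have hlast : E (Fin.last m) = 1 - ∑ i : Fin m, E i.castSucc := by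
    rw [← hE, Fin.sum_univ_castSucc, add_sub_cancel_left]
  have hsum : ∑ i, centeredEffects E i
      = (2 : ℝ) • ∑ i : Fin m, E i.castSucc - (2 / (m + 1 : ℕ) * m : ℝ) • 1 := by
    change ∑ i : Fin m, ((2 : ℝ) • E i.castSucc - (2 / (m + 1 : ℕ) : ℝ) • 1) = _
    simp only [Finset.sum_sub_distrib, ← Finset.smul_sum, Finset.sum_const, Finset.card_univ,
      Fintype.card_fin, ← Nat.cast_smul_eq_nsmul ℝ, mul_smul]
  rw [hsum, hlast]
  push_cast
  match_scalars <;> field_simp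
  ring

lemma exists_isPOVM_centeredEffects_eq_iff {d n : ℕ} (hn : n ≠ 0)
    {A : Fin (n - 1) → Matrix (Fin d) (Fin d) ℂ} :
    (∃ E, IsPOVM E ∧ centeredEffects E = A) ↔
      (∀ i, (1 + (n / 2 : ℝ) • A i).PosSemidef) ∧ (1 - (n / 2 : ℝ) • ∑ i, A i).PosSemidef := by
  obtain ⟨m, rfl⟩ := Nat.exists_eq_add_one_of_ne_zero hn
  constructor
  · rintro ⟨E, hE, rfl⟩
    refine ⟨fun i ↦ ?_, ?_⟩
    · rw [one_add_smul_centeredEffects]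
      exact (hE.1 _).smul (by positivity)
    · rw [one_sub_smul_sum_centeredEffects hE.2]
      exact (hE.1 _).smul (by positivity)
  · rintro ⟨hA, hA_sum⟩
    let F (i : Fin m) : Matrix (Fin d) (Fin d) ℂ := (2⁻¹ : ℝ) • (A i + (2 / (m + 1 : ℕ) : ℝ) • 1)
    let E : Fin (m + 1) → Matrix (Fin d) (Fin d) ℂ :=
      Fin.snoc (α := fun _ ↦ Matrix (Fin d) (Fin d) ℂ) F (1 - ∑ i, F i)
    have hE_sum : ∑ i, E i = 1 := by
      simp only [E, Fin.sum_univ_castSucc, Fin.snoc_castSucc, Fin.snoc_last, add_sub_cancel]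
    have hEA : centeredEffects E = A := funext fun i ↦ by
      simp only [centeredEffects_succ, E, F, Fin.snoc_castSucc, smul_inv_smul₀ (two_ne_zero' ℝ),
        add_sub_cancel_right]
    have hm : (0 : ℝ) < (m + 1 : ℕ) := by positivity
    refine ⟨E, ⟨fun i ↦ (posSemidef_smul_iff_of_pos hm).mp ?_, hE_sum⟩, hEA⟩
    induction i using Fin.lastCases with
    | last => rwa [← one_sub_smul_sum_centeredEffects hE_sum, hEA]
    | cast i => exact one_add_smul_centeredEffects E i ▸ hEA ▸ hA i

variable {d g : ℕ} {k : Fin g → ℕ}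

/-- The centered effects of all the measurements of a family, as one tuple. -/
noncomputable def centeredFamily (k : Fin g → ℕ)
    (E : (x : Fin g) → Fin (k x) → Matrix (Fin d) (Fin d) ℂ) (p : (x : Fin g) × Fin (k x - 1)) :
    Matrix (Fin d) (Fin d) ℂ :=
  centeredEffects (E p.1) p.2

/-- The points cutting out the matrix jewel: `jewelVertex k j` collects the centered effects of the
deterministic measurements which answer `j x` to the question `x`. -/
noncomputable def jewelVertex (k : Fin g → ℕ) (j : (x : Fin g) → Fin (k x))
    (p : (x : Fin g) × Fin (k x - 1)) : ℝ :=
  -2 / k p.1 + if (p.2 : ℕ) = j p.1 then 2 else 0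

lemma sum_noisyFamily {E : (x : Fin g) → Fin (k x) → Matrix (Fin d) (Fin d) ℂ} {x : Fin g}
    (hk : k x ≠ 0) (hE : ∑ i, E x i = 1) (s : ℝ) : ∑ i, noisyFamily k s E x i = 1 := by
  have hk' : (k x : ℝ) ≠ 0 := Nat.cast_ne_zero.mpr hk
  rw [Finset.sum_add_distrib, ← Finset.smul_sum, hE, Finset.sum_const, Finset.card_univ,
    Fintype.card_fin, ← Nat.cast_smul_eq_nsmul ℝ, smul_smul, ← add_smul, mul_div_cancel₀ _ hk',
    add_sub_cancel, one_smul]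

lemma centeredFamily_noisyFamily (hk : ∀ x, k x ≠ 0) (s : ℝ)
    (E : (x : Fin g) → Fin (k x) → Matrix (Fin d) (Fin d) ℂ) :
    centeredFamily k (noisyFamily k s E) = s • centeredFamily k E := by
  ext1 p
  have hk' : (k p.1 : ℝ) ≠ 0 := Nat.cast_ne_zero.mpr (hk p.1)
  simp only [centeredFamily, centeredEffects, noisyFamily, Pi.smul_apply]
  match_scalars <;> field_simp
  ring

lemma centeredFamily_marginals {J : ((x : Fin g) → Fin (k x)) → Matrix (Fin d) (Fin d) ℂ}
    (hJ : ∑ j, J j = 1) (p : (x : Fin g) × Fin (k x - 1)) :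
    centeredFamily k (fun x i ↦ ∑ j, if j x = i then J j else 0) p
      = ∑ j, jewelVertex k j p • J j := by
  have hindex (j : (x : Fin g) → Fin (k x)) :
      j p.1 = p.2.castLE (Nat.sub_le _ 1) ↔ (p.2 : ℕ) = j p.1 := by
    rw [Fin.ext_iff, Fin.val_castLE, eq_comm]
  simp_rw [jewelVertex, add_smul, Finset.sum_add_distrib, ← Finset.smul_sum, hJ, ite_smul,
    zero_smul, centeredFamily, centeredEffects, hindex, Finset.smul_sum, smul_ite, smul_zero,
    neg_div, neg_smul]
  rw [neg_add_eq_sub]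

lemma sum_marginals (J : ((x : Fin g) → Fin (k x)) → Matrix (Fin d) (Fin d) ℂ) (x : Fin g) :
    ∑ i, ∑ j, (if j x = i then J j else 0) = ∑ j, J j := by
  rw [Finset.sum_comm]
  simp

lemma compatibleFamily_iff_mem_matrixHull
    {F : (x : Fin g) → Fin (k x) → Matrix (Fin d) (Fin d) ℂ} (hF : ∀ x, ∑ i, F x i = 1) :
    CompatibleFamily k F ↔ centeredFamily k F ∈ matrixHull (jewelVertex k) := by
  constructor
  · rintro ⟨J, ⟨hJ, hJ1⟩, hFJ⟩
    obtain rfl : F = fun x i ↦ ∑ j, if j x = i then J j else 0 := funext₂ hFJ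
    exact ⟨J, hJ, hJ1, centeredFamily_marginals hJ1⟩
  · rintro ⟨J, hJ, hJ1, hFJ⟩
    refine ⟨J, ⟨hJ, hJ1⟩, fun x ↦ congrFun (eq_of_centeredEffects_eq ?_ (funext fun i ↦ ?_))⟩
    · rw [hF, sum_marginals, hJ1]
    · exact (hFJ ⟨x, i⟩).trans (centeredFamily_marginals hJ1 ⟨x, i⟩).symm

lemma zero_mem_convexHull_range_jewelVertex (hk : ∀ x, k x ≠ 0) :
    0 ∈ convexHull ℝ (Set.range (jewelVertex k)) := by
  have hk' (x : Fin g) : (k x : ℝ) ≠ 0 := Nat.cast_ne_zero.mpr (hk x)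
  have hunif (x : Fin g) : ∑ _i : Fin (k x), (k x : ℝ)⁻¹ = 1 := by simp [hk']
  let w (_ : (x : Fin g) → Fin (k x)) : ℝ := ∏ x, (k x : ℝ)⁻¹
  have hw : ∑ j, w j = 1 := by
    simp_rw [w, ← Fintype.prod_sum (fun (x : Fin g) (_ : Fin (k x)) ↦ (k x : ℝ)⁻¹), hunif,
      Finset.prod_const_one]
  have hmean : ∑ j, w j • jewelVertex k j = 0 := by
    ext p
    have hmarginal := sum_ite_prod_eq hunif p.1 (p.2.castLE (Nat.sub_le _ 1))
    simp_rw [Fin.ext_iff, Fin.val_castLE, eq_comm (b := (p.2 : ℕ))] at hmarginal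
    have hmean_ite : ∑ j, w j * (if (p.2 : ℕ) = j p.1 then 2 else 0) = (k p.1 : ℝ)⁻¹ * 2 := by
      simp_rw [← hmarginal, Finset.sum_mul, ite_mul, zero_mul, mul_ite, mul_zero, w]
    simp_rw [Finset.sum_apply, Pi.smul_apply, smul_eq_mul, jewelVertex, mul_add,
      Finset.sum_add_distrib, ← Finset.sum_mul, hw, hmean_ite, Pi.zero_apply]
    ring
  exact mem_convexHull_of_exists_fintype w _ (fun _ ↦ by positivity) hw (fun j ↦ ⟨j, rfl⟩) hmean

/-- The numbers `λ_max(∑ A ⊗ X)`, where `A` is the tuple of centered effects of a family of POVMs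
and `X` is a point of the matrix jewel. -/
def witnessValues (d : ℕ) (k : Fin g → ℕ) : Set ℝ :=
  {t | ∃ E : (x : Fin g) → Fin (k x) → Matrix (Fin d) (Fin d) ℂ, (∀ x, IsPOVM (E x)) ∧
    ∃ X ∈ matrixPolar (n := Fin d) (jewelVertex k),
      t = lambdaMaxC (∑ p, centeredFamily k E p ⊗ₖ X p)}

lemma compatibleFamily_noisyFamily_iff [NeZero d] (hk : ∀ x, k x ≠ 0)
    {E : (x : Fin g) → Fin (k x) → Matrix (Fin d) (Fin d) ℂ} (hE : ∀ x, IsPOVM (E x)) {s : ℝ}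
    (hs : 0 < s) :
    CompatibleFamily k (noisyFamily k s E) ↔ ∀ X ∈ matrixPolar (n := Fin d) (jewelVertex k),
      lambdaMaxC (∑ p, centeredFamily k E p ⊗ₖ X p) ≤ s⁻¹ := by
  have hA (p) : (centeredFamily k E p).IsHermitian := (hE p.1).isHermitian_centeredEffects p.2
  rw [compatibleFamily_iff_mem_matrixHull fun x ↦ sum_noisyFamily (hk x) (hE x).2 s,
    centeredFamily_noisyFamily hk, mem_matrixHull_iff (zero_mem_convexHull_range_jewelVertex hk)
    (B := s • centeredFamily k E) fun p ↦ (hA p).smul (.all s)]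
  refine forall₂_congr fun X hX ↦ ?_
  have hherm : (∑ p, centeredFamily k E p ⊗ₖ X p).IsHermitian :=
    isSelfAdjoint_sum _ fun p _ ↦ by
      rw [IsSelfAdjoint, star_eq_conjTranspose, conjTranspose_kronecker, hA p, hX.1 p]
  rw [lambdaMaxC_le_iff hherm, ← posSemidef_smul_iff_of_pos hs (M := s⁻¹ • 1 - _), smul_sub,
    smul_inv_smul₀ hs.ne', Finset.smul_sum]
  simp_rw [Pi.smul_apply, smul_kronecker]

end Jewel

section CompatibilityDegree

variable {d g : ℕ} {k : Fin g → ℕ}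

lemma le_compatDeg {E : (x : Fin g) → Fin (k x) → Matrix (Fin d) (Fin d) ℂ} {s : ℝ}
    (hs : s ∈ Set.Icc 0 1) (h : CompatibleFamily k (noisyFamily k s E)) : s ≤ compatDeg k E :=
  le_csSup ⟨1, fun _ hr ↦ hr.1.2⟩ ⟨hs, h⟩

lemma minCompatDeg_le_compatDeg {E : (x : Fin g) → Fin (k x) → Matrix (Fin d) (Fin d) ℂ}
    (hE : ∀ x, IsPOVM (E x)) : minCompatDeg d g k ≤ compatDeg k E := by
  refine csInf_le ⟨0, ?_⟩ ⟨E, hE, rfl⟩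
  rintro _ ⟨F, -, rfl⟩
  exact Real.sSup_nonneg fun s hs ↦ hs.1.1

lemma le_minCompatDeg [NeZero d] [NeZero g] (hk : ∀ x, 2 ≤ k x) {s : ℝ} (hs0 : 0 ≤ s)
    (hs : ∀ E : (x : Fin g) → Fin (k x) → Matrix (Fin d) (Fin d) ℂ, (∀ x, IsPOVM (E x)) →
      CompatibleFamily k (noisyFamily k s E)) : s ≤ minCompatDeg d g k := by
  refine le_csInf ?_ ?_
  · exact ⟨_, fun x ↦ Pi.single ⟨0, two_pos.trans_le (hk x)⟩ 1, fun x ↦ isPOVM_single _, rfl⟩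
  · rintro _ ⟨E, hE, rfl⟩
    exact le_compatDeg ⟨hs0, le_one_of_forall_compatibleFamily hk hs⟩ (hs E hE)

lemma minCompatDeg_pos [NeZero d] [NeZero g] (hk : ∀ x, 2 ≤ k x) : 0 < minCompatDeg d g k := by
  have hg : 0 < (g : ℝ)⁻¹ := by simpa using NeZero.pos g
  exact hg.trans_le <| le_minCompatDeg hk hg.le fun E hE ↦
    compatibleFamily_noisyFamily_inv (NeZero.ne g) (fun x ↦ (two_pos.trans_le (hk x)).ne') hE

lemma inv_minCompatDeg_mem_upperBounds [NeZero d] [NeZero g] (hk : ∀ x, 2 ≤ k x) :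
    (minCompatDeg d g k)⁻¹ ∈ upperBounds (witnessValues d k) := by
  have hk0 (x : Fin g) : k x ≠ 0 := (two_pos.trans_le (hk x)).ne'
  have hm := minCompatDeg_pos (d := d) hk
  rintro t ⟨E, hE, X, hX, rfl⟩
  set t := lambdaMaxC (∑ p, centeredFamily k E p ⊗ₖ X p)
  obtain ht | ht := le_or_gt t 0
  · exact ht.trans (inv_nonneg.mpr hm.le)
  · refine (le_inv_comm₀ ht hm).mpr ((minCompatDeg_le_compatDeg hE).trans ?_)
    refine Real.sSup_le (fun s ⟨⟨hs0, _⟩, hs⟩ ↦ ?_) (by positivity)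
    obtain rfl | hs0 := hs0.eq_or_lt
    · positivity
    · exact (le_inv_comm₀ ht hs0).mp ((compatibleFamily_noisyFamily_iff hk0 hE hs0).mp hs X hX)

lemma inv_minCompatDeg_le [NeZero d] [NeZero g] (hk : ∀ x, 2 ≤ k x) {u : ℝ}
    (hu : u ∈ upperBounds (witnessValues d k)) : (minCompatDeg d g k)⁻¹ ≤ u := by
  have hk0 (x : Fin g) : k x ≠ 0 := (two_pos.trans_le (hk x)).ne'
  have hm := minCompatDeg_pos (d := d) hk
  by_contra! hlt
  obtain ⟨r, hr, hrm⟩ := exists_between (max_lt hlt (inv_pos.mpr hm))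
  have hr0 : 0 < r := (le_max_right _ _).trans_lt hr
  have hru : u ≤ r := ((le_max_left _ _).trans_lt hr).le
  refine ((lt_inv_comm₀ hr0 hm).mp hrm).not_ge (le_minCompatDeg hk (by positivity) fun E hE ↦ ?_)
  rw [compatibleFamily_noisyFamily_iff hk0 hE (inv_pos.mpr hr0), inv_inv]
  exact fun X hX ↦ (hu ⟨E, hE, X, hX, rfl⟩).trans hru

theorem isLUB_witnessValues [NeZero d] [NeZero g] (hk : ∀ x, 2 ≤ k x) :
    IsLUB (witnessValues d k) (minCompatDeg d g k)⁻¹ :=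
  ⟨inv_minCompatDeg_mem_upperBounds hk, fun _ ↦ inv_minCompatDeg_le hk⟩

lemma witnessValues_nonempty (hk : ∀ x, k x ≠ 0) : (witnessValues d k).Nonempty :=
  ⟨lambdaMaxC _, fun x ↦ Pi.single ⟨0, Nat.pos_of_ne_zero (hk x)⟩ 1, fun _ ↦ isPOVM_single _, 0,
    ⟨fun _ ↦ isHermitian_zero, fun _ ↦ by simpa using PosSemidef.one⟩, rfl⟩

lemma mem_witnessValues_iff (hk : ∀ x, k x ≠ 0) {t : ℝ} :
    t ∈ witnessValues d k ↔
      ∃ A X : (x : Fin g) → Fin (k x - 1) → Matrix (Fin d) (Fin d) ℂ,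
        (∀ x i, (A x i).IsHermitian) ∧
        (∀ x i, (X x i).IsHermitian) ∧
        (∀ x i, (1 + ((k x : ℝ) / 2) • A x i).PosSemidef) ∧
        (∀ x, (1 - ((k x : ℝ) / 2) • ∑ i, A x i).PosSemidef) ∧
        (∀ j : (x : Fin g) → Fin (k x), (1 - ∑ x, ∑ i : Fin (k x - 1),
          ((-2 / (k x : ℝ)) + (if (i : ℕ) = ((j x : ℕ)) then 2 else 0)) • X x i).PosSemidef) ∧
        t = lambdaMaxC (∑ x, ∑ i, A x i ⊗ₖ X x i) := by
  constructor
  · rintro ⟨E, hE, X, ⟨hX, hX_jewel⟩, rfl⟩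
    have hA (x : Fin g) := (exists_isPOVM_centeredEffects_eq_iff (hk x)).mp ⟨E x, hE x, rfl⟩
    simp_rw [Fintype.sum_sigma] at hX_jewel ⊢
    exact ⟨fun x ↦ centeredEffects (E x), fun x i ↦ X ⟨x, i⟩,
      fun x ↦ (hE x).isHermitian_centeredEffects, fun x i ↦ hX ⟨x, i⟩, fun x ↦ (hA x).1,
      fun x ↦ (hA x).2, hX_jewel, rfl⟩
  · rintro ⟨A, X, -, hX, hA, hA_sum, hX_jewel, rfl⟩
    choose E hE hEA using fun x ↦
      (exists_isPOVM_centeredEffects_eq_iff (hk x)).mpr ⟨hA x, hA_sum x⟩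
    obtain rfl : (fun x ↦ centeredEffects (E x)) = A := funext hEA
    refine ⟨E, hE, fun p ↦ X p.1 p.2, ⟨fun p ↦ hX p.1 p.2, fun j ↦ ?_⟩, ?_⟩
    · simpa only [Fintype.sum_sigma, jewelVertex] using hX_jewel j
    · simp only [Fintype.sum_sigma, centeredFamily]

end CompatibilityDegree

/-- The supremum of `λ_max(Σ_{x,i} A_{i|x} ⊗ X_{i|x})` over Hermitian families subject to the
stated spectrahedral constraints equals `1/s_ℂ(d,g,(k_1,…,k_g))`. -/
theorem stmt_19 (g d : ℕ) (hg : 1 ≤ g) (hd : 1 ≤ d) (k : Fin g → ℕ) (hk : ∀ x, 2 ≤ k x) :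
    sSup {t : ℝ |
      ∃ A X : (x : Fin g) → Fin (k x - 1) → Matrix (Fin d) (Fin d) ℂ,
        (∀ x i, (A x i).IsHermitian) ∧
        (∀ x i, (X x i).IsHermitian) ∧
        (∀ x i, ((1 : Matrix (Fin d) (Fin d) ℂ) + ((k x : ℝ) / 2) • A x i).PosSemidef) ∧
        (∀ x, ((1 : Matrix (Fin d) (Fin d) ℂ) - ((k x : ℝ) / 2) • ∑ i, A x i).PosSemidef) ∧
        (∀ j : (x : Fin g) → Fin (k x),
          ((1 : Matrix (Fin d) (Fin d) ℂ) -
            ∑ x, ∑ i : Fin (k x - 1), ((-2 / (k x : ℝ)) +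
              (if (i : ℕ) = ((j x : ℕ)) then 2 else 0)) • X x i).PosSemidef) ∧
        t = lambdaMaxC (∑ x, ∑ i, A x i ⊗ₖ X x i)}
    = 1 / minCompatDeg d g k := by
  have : NeZero d := ⟨Nat.one_le_iff_ne_zero.mp hd⟩
  have : NeZero g := ⟨Nat.one_le_iff_ne_zero.mp hg⟩
  have hk0 (x : Fin g) : k x ≠ 0 := (two_pos.trans_le (hk x)).ne'
  rw [one_div, ← (isLUB_witnessValues hk).csSup_eq (witnessValues_nonempty hk0)]
  exact congrArg sSup (Set.ext fun _ ↦ (mem_witnessValues_iff hk0).symm)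
end
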